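/- Let R > 0 and let h : [0,R) → ℝ be twice continuously differentiable satisfying assumptions (A1)–(A3), with t* the smallest zero of h in (0,R). Then for all t ∈ [0,t*): t* − H_h(t) ≤ [ (1/3)·h''(t*)²/h'(t*)² + (2/9)·D⁻h''(t*)/(−h'(t*)) ]·(t* − t)³, where H_h(t) = t − (1/(1 − L_h(t)))·(h(t)/h'(t)), L_h(t) = h(t)h''(t)/(2h'(t)²), and D⁻h''(t*) = sup_{u < t*} (h''(t*) − h''(u))/(t* − u) is the left directional derivative of h'' at t*. -/

import Mathlib

/-! Write `e = t* - t`, `a = -h'(t)`, `b = h''(t)`. The Halley error is an explicit rational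
function of `a`, `b`, `e` and the Taylor remainder `r = h(t*) - (h(t) + h'(t) e + h''(t) e² / 2)`,
namely `((2a + be) r + b² e³ / 2) / (2a² - abe + b² e² / 2 + br)`. Since `h''` is nondecreasing,
`r ≥ 0` and `a - be ≥ -h'(t*)`; since `h''` is convex, it lies below its chord on `[t, t*]`, whose
slope is at most `D⁻h''(t*)`, so `r ≤ D⁻h''(t*) e³ / 6`. -/

open Set

section Algebra

variable {K : Type*} [Field K]

/-- The scalar Halley auxiliary function `L_f = f f'' / (2 f'²)`; the separate arguments
`f'` and `f''` stand for the first and second derivatives of `f`. -/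
def halleyAux (f f' f'' : K → K) (t : K) : K :=
  f t * f'' t / (2 * f' t ^ 2)

/-- The scalar Halley iteration function `H_f`, in the same encoding as `halleyAux`. -/
def halleyMap (f f' f'' : K → K) (t : K) : K :=
  t - 1 / (1 - halleyAux f f' f'' t) * (f t / f' t)

theorem one_sub_halleyAux [NeZero (2 : K)] {f f' f'' : K → K} {t : K} (hf' : f' t ≠ 0) :
    1 - halleyAux f f' f'' t = (2 * f' t ^ 2 - f t * f'' t) / (2 * f' t ^ 2) := by
  unfold halleyAux
  field_simp

theorem sub_halleyMap_eq_div [NeZero (2 : K)] {f f' f'' : K → K} {t : K} (s : K)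
    (hf' : f' t ≠ 0) (hden : 2 * f' t ^ 2 - f t * f'' t ≠ 0) :
    s - halleyMap f f' f'' t =
      ((2 * f' t - f'' t * (s - t)) * (f t + f' t * (s - t) + f'' t / 2 * (s - t) ^ 2) +
        f'' t ^ 2 * (s - t) ^ 3 / 2) / (2 * f' t ^ 2 - f t * f'' t) := by
  rw [halleyMap, one_sub_halleyAux hf']
  field_simp
  ring

variable [LinearOrder K] [IsStrictOrderedRing K]

theorem three_halves_mul_sq_le (a p : K) : 3 / 2 * a ^ 2 ≤ 2 * a ^ 2 - a * p + p ^ 2 / 2 := by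
  have hsq : 0 ≤ (a - p) ^ 2 / 2 := by positivity
  linear_combination hsq

theorem two_mul_add_div_le {α a p : K} (hα : 0 < α) (hp : 0 ≤ p) (hαa : α ≤ a - p) :
    (2 * a + p) / (2 * a ^ 2 - a * p + p ^ 2 / 2) ≤ 4 / 3 / α := by
  have ha : 0 < a := by linarith
  have hden : 0 < 2 * a ^ 2 - a * p + p ^ 2 / 2 :=
    lt_of_lt_of_le (by positivity) (three_halves_mul_sq_le a p)
  rw [div_le_div_iff₀ hden hα]
  calc (2 * a + p) * α ≤ (2 * a + p) * (a - p) := by gcongr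
    _ ≤ 4 / 3 * (2 * a ^ 2 - a * p + p ^ 2 / 2) := by
      nlinarith [sq_nonneg (a - p), sq_nonneg p, sq_nonneg a]

theorem halley_error_quotient_le {α β a b e r D : K} (hα : 0 < α) (hb : 0 ≤ b) (he : 0 ≤ e)
    (hαa : α ≤ a - b * e) (hbβ : b ≤ β) (hr : 0 ≤ r) (hrD : r ≤ D / 6 * e ^ 3) :
    ((2 * a + b * e) * r + b ^ 2 * e ^ 3 / 2) /
        (2 * a ^ 2 - a * (b * e) + (b * e) ^ 2 / 2 + b * r) ≤
      (1 / 3 * (β ^ 2 / α ^ 2) + 2 / 9 * (D / α)) * e ^ 3 := by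
  have hbe : 0 ≤ b * e := mul_nonneg hb he
  have hle : α ≤ a := by linarith
  have ha : 0 < a := hα.trans_le hle
  set q := 2 * a ^ 2 - a * (b * e) + (b * e) ^ 2 / 2
  have hq : 3 / 2 * a ^ 2 ≤ q := three_halves_mul_sq_le a (b * e)
  have hq_pos : 0 < q := lt_of_lt_of_le (by positivity) hq
  have remainder_term : (2 * a + b * e) * r / q ≤ 2 / 9 * (D / α) * e ^ 3 := calc
    (2 * a + b * e) * r / q = (2 * a + b * e) / q * r := by ring
    _ ≤ 4 / 3 / α * (D / 6 * e ^ 3) :=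
      mul_le_mul (two_mul_add_div_le hα hbe hαa) hrD hr (by positivity)
    _ = 2 / 9 * (D / α) * e ^ 3 := by ring
  have cubic_term : b ^ 2 * e ^ 3 / 2 / q ≤ 1 / 3 * (β ^ 2 / α ^ 2) * e ^ 3 := calc
    b ^ 2 * e ^ 3 / 2 / q ≤ β ^ 2 * e ^ 3 / 2 / (3 / 2 * α ^ 2) := by
      gcongr
      exact le_trans (by gcongr) hq
    _ = 1 / 3 * (β ^ 2 / α ^ 2) * e ^ 3 := by field_simp
  calc ((2 * a + b * e) * r + b ^ 2 * e ^ 3 / 2) / (q + b * r)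
      ≤ ((2 * a + b * e) * r + b ^ 2 * e ^ 3 / 2) / q := by
        gcongr
        exact le_add_of_nonneg_right (mul_nonneg hb hr)
    _ = (2 * a + b * e) * r / q + b ^ 2 * e ^ 3 / 2 / q := add_div ..
    _ ≤ (1 / 3 * (β ^ 2 / α ^ 2) + 2 / 9 * (D / α)) * e ^ 3 := by
      linear_combination remainder_term + cubic_term

end Algebra

section Taylor

variable {f f' f'' : ℝ → ℝ} {a b : ℝ}

theorem le_cubic_of_deriv_le_quadratic {c₀ c₁ c₂ : ℝ}
    (hf : ∀ x ∈ Icc a b, HasDerivWithinAt f (f' x) (Icc a b) x)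
    (hf' : ∀ x ∈ Icc a b, f' x ≤ c₀ + c₁ * (x - a) + c₂ * (x - a) ^ 2) :
    ∀ x ∈ Icc a b, f x ≤ f a + c₀ * (x - a) + c₁ / 2 * (x - a) ^ 2 + c₂ / 3 * (x - a) ^ 3 := by
  have hcubic (x : ℝ) :
      HasDerivAt (fun y ↦ f a + c₀ * (y - a) + c₁ / 2 * (y - a) ^ 2 + c₂ / 3 * (y - a) ^ 3)
        (c₀ + c₁ * (x - a) + c₂ * (x - a) ^ 2) x := by
    have hsub : HasDerivAt (fun y ↦ y - a) 1 x := (hasDerivAt_id x).sub_const a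
    exact ((((hsub.const_mul c₀).const_add (f a)).add ((hsub.pow 2).const_mul (c₁ / 2))).add
      ((hsub.pow 3).const_mul (c₂ / 3))).congr_deriv (by push_cast; ring)
  exact image_le_of_deriv_right_le_deriv_boundary
    (fun x hx ↦ (hf x hx).continuousWithinAt)
    (fun x hx ↦ (hf x (Ico_subset_Icc_self hx)).mono_of_mem_nhdsWithin (Icc_mem_nhdsGE_of_mem hx))
    (by simp)
    (fun x _ ↦ (hcubic x).continuousAt.continuousWithinAt)
    (fun x _ ↦ (hcubic x).hasDerivWithinAt)
    (fun x hx ↦ hf' x (Ico_subset_Icc_self hx))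

theorem quadratic_le_of_affine_le_deriv {c₀ c₁ : ℝ}
    (hf : ∀ x ∈ Icc a b, HasDerivWithinAt f (f' x) (Icc a b) x)
    (hf' : ∀ x ∈ Icc a b, c₀ + c₁ * (x - a) ≤ f' x) :
    ∀ x ∈ Icc a b, f a + c₀ * (x - a) + c₁ / 2 * (x - a) ^ 2 ≤ f x := by
  intro x hx
  have hneg := le_cubic_of_deriv_le_quadratic (c₀ := -c₀) (c₁ := -c₁) (c₂ := 0)
    (fun y hy ↦ (hf y hy).neg) (fun y hy ↦ by linarith [hf' y hy]) x hx
  simp only [Pi.neg_apply] at hneg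
  linarith

theorem affine_le_of_le_deriv {c : ℝ}
    (hf : ∀ x ∈ Icc a b, HasDerivWithinAt f (f' x) (Icc a b) x)
    (hf' : ∀ x ∈ Icc a b, c ≤ f' x) :
    ∀ x ∈ Icc a b, f a + c * (x - a) ≤ f x := by
  simpa using quadratic_le_of_affine_le_deriv (c₀ := c) (c₁ := 0) hf (by simpa using hf')

theorem taylor_quadratic_le_of_le_deriv2 {c : ℝ}
    (hf : ∀ x ∈ Icc a b, HasDerivWithinAt f (f' x) (Icc a b) x)
    (hf' : ∀ x ∈ Icc a b, HasDerivWithinAt f' (f'' x) (Icc a b) x)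
    (hf'' : ∀ x ∈ Icc a b, c ≤ f'' x) :
    ∀ x ∈ Icc a b, f a + f' a * (x - a) + c / 2 * (x - a) ^ 2 ≤ f x :=
  quadratic_le_of_affine_le_deriv hf (affine_le_of_le_deriv hf' hf'')

theorem le_taylor_cubic_of_deriv2_le_affine {c D : ℝ}
    (hf : ∀ x ∈ Icc a b, HasDerivWithinAt f (f' x) (Icc a b) x)
    (hf' : ∀ x ∈ Icc a b, HasDerivWithinAt f' (f'' x) (Icc a b) x)
    (hf'' : ∀ x ∈ Icc a b, f'' x ≤ c + D * (x - a)) :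
    ∀ x ∈ Icc a b, f x ≤ f a + f' a * (x - a) + c / 2 * (x - a) ^ 2 + D / 6 * (x - a) ^ 3 := by
  intro x hx
  have hquad := le_cubic_of_deriv_le_quadratic (c₂ := 0) hf' (by simpa using hf'')
  have hcubic := le_cubic_of_deriv_le_quadratic (c₀ := f' a) (c₁ := c) (c₂ := D / 2) hf
    (fun y hy ↦ by linarith [hquad y hy]) x hx
  linarith

end Taylor

theorem sub_halleyMap_le_of_deriv2_le_affine {f f' f'' : ℝ → ℝ} {t s D : ℝ} (hts : t ≤ s)
    (hf : ∀ x ∈ Icc t s, HasDerivWithinAt f (f' x) (Icc t s) x)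
    (hf' : ∀ x ∈ Icc t s, HasDerivWithinAt f' (f'' x) (Icc t s) x)
    (hroot : f s = 0) (hneg : f' s < 0) (hf''_nonneg : 0 ≤ f'' t)
    (hf''_ge : ∀ x ∈ Icc t s, f'' t ≤ f'' x)
    (hf''_le : ∀ x ∈ Icc t s, f'' x ≤ f'' t + D * (x - t)) :
    s - halleyMap f f' f'' t ≤
      (1 / 3 * (f'' s ^ 2 / f' s ^ 2) + 2 / 9 * (D / -f' s)) * (s - t) ^ 3 := by
  have hs : s ∈ Icc t s := right_mem_Icc.2 hts
  have he : 0 ≤ s - t := sub_nonneg.2 hts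
  have hbe : 0 ≤ f'' t * (s - t) := mul_nonneg hf''_nonneg he
  obtain ⟨r, hr⟩ : ∃ r, f t + f' t * (s - t) + f'' t / 2 * (s - t) ^ 2 = -r :=
    ⟨_, (neg_neg _).symm⟩
  have hr_nonneg : 0 ≤ r := by
    linarith [taylor_quadratic_le_of_le_deriv2 hf hf' hf''_ge s hs]
  have hr_le : r ≤ D / 6 * (s - t) ^ 3 := by
    linarith [le_taylor_cubic_of_deriv2_le_affine hf hf' hf''_le s hs]
  have hslope : f' t + f'' t * (s - t) ≤ f' s := affine_le_of_le_deriv hf' hf''_ge s hs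
  have hden : 2 * f' t ^ 2 - f t * f'' t =
      2 * (-f' t) ^ 2 - -f' t * (f'' t * (s - t)) + (f'' t * (s - t)) ^ 2 / 2 + f'' t * r := by
    linear_combination -f'' t * hr
  have hf't : f' t < 0 := by linarith
  have hden_pos : 0 < 2 * f' t ^ 2 - f t * f'' t := by
    have hsq : 0 < (-f' t) ^ 2 := pow_pos (neg_pos.2 hf't) 2
    linarith [three_halves_mul_sq_le (-f' t) (f'' t * (s - t)), mul_nonneg hf''_nonneg hr_nonneg]
  calc s - halleyMap f f' f'' t
      = ((2 * -f' t + f'' t * (s - t)) * r + f'' t ^ 2 * (s - t) ^ 3 / 2) /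
          (2 * (-f' t) ^ 2 - -f' t * (f'' t * (s - t)) + (f'' t * (s - t)) ^ 2 / 2 +
            f'' t * r) := by
        rw [sub_halleyMap_eq_div s hf't.ne hden_pos.ne', hr, ← hden]
        ring
    _ ≤ (1 / 3 * (f'' s ^ 2 / (-f' s) ^ 2) + 2 / 9 * (D / -f' s)) * (s - t) ^ 3 :=
        halley_error_quotient_le (neg_pos.2 hneg) hf''_nonneg he (by linarith) (hf''_ge s hs)
          hr_nonneg hr_le
    _ = (1 / 3 * (f'' s ^ 2 / f' s ^ 2) + 2 / 9 * (D / -f' s)) * (s - t) ^ 3 := by rw [neg_sq]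

section LeftDeriv

variable {S : Set ℝ} {g : ℝ → ℝ} {a b s t x : ℝ}

theorem le_add_leftDeriv_mul_sub_of_convexOn (hg : ConvexOn ℝ S g) (hs : s ∈ interior S)
    (ht : t ∈ S) (hts : t < s) (hx : x ∈ Icc t s) :
    g x ≤ g t + derivWithin g (Iio s) s * (x - t) := by
  rcases hx.1.eq_or_lt with rfl | htx
  · simp
  have hS : Icc t s ⊆ S := hg.1.ordConnected.out ht (interior_subset hs)
  have hslope : (g x - g t) / (x - t) ≤ derivWithin g (Iio s) s := calc
    (g x - g t) / (x - t) ≤ (g s - g t) / (s - t) :=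
      hg.secant_mono ht (hS hx) (interior_subset hs) htx.ne' hts.ne' hx.2
    _ = slope g t s := (slope_def_field g t s).symm
    _ ≤ derivWithin g (Iio s) s := hg.slope_le_leftDeriv_of_mem_interior ht hs hts
  linarith [(div_le_iff₀ (sub_pos.2 htx)).1 hslope]

theorem sSup_div_sub_image_Ico_eq_leftDeriv (hg : ConvexOn ℝ (Ico a b) g) (hs : s ∈ Ioo a b) :
    sSup ((fun u ↦ (g s - g u) / (s - u)) '' Ico a s) = derivWithin g (Iio s) s := by
  have hleft : {u ∈ Ico a b | u < s} = Ico a s := by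
    ext u
    exact ⟨fun hu ↦ ⟨hu.1.1, hu.2⟩, fun hu ↦ ⟨⟨hu.1, hu.2.trans hs.2⟩, hu.2⟩⟩
  rw [hg.leftDeriv_eq_sSup_slope_of_mem_interior (by rwa [interior_Ico]), hleft]
  simp only [← slope_def_field, slope_comm g _ s]

end LeftDeriv

theorem halley_majorant_tstar_sub_Hh_le_general {S : Set ℝ} {h h1 h2 : ℝ → ℝ} {t tstar : ℝ}
    (hd1 : ∀ x ∈ S, HasDerivWithinAt h (h1 x) S x)
    (hd2 : ∀ x ∈ S, HasDerivWithinAt h1 (h2 x) S x)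
    (hconvex : ConvexOn ℝ S h2) (hmono : MonotoneOn h2 S)
    (hint : tstar ∈ interior S) (hzero : h tstar = 0) (hneg : h1 tstar < 0)
    (ht : t ∈ S) (htt : t < tstar) (hnonneg : 0 ≤ h2 t) :
    tstar - halleyMap h h1 h2 t ≤
      (1 / 3 * (h2 tstar ^ 2 / h1 tstar ^ 2) +
        2 / 9 * (derivWithin h2 (Iio tstar) tstar / -h1 tstar)) * (tstar - t) ^ 3 := by
  have hsub : Icc t tstar ⊆ S := hconvex.1.ordConnected.out ht (interior_subset hint)
  exact sub_halleyMap_le_of_deriv2_le_affine htt.le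
    (fun x hx ↦ (hd1 x (hsub hx)).mono hsub) (fun x hx ↦ (hd2 x (hsub hx)).mono hsub)
    hzero hneg hnonneg (fun x hx ↦ hmono ht (hsub hx) hx.1)
    (fun x hx ↦ le_add_leftDeriv_mul_sub_of_convexOn hconvex hint ht htt hx)

/-- Under (A1)-(A3), for all `t ∈ [0,t*)`,
`t* - H_h(t) ≤ [(1/3)·h''(t*)²/h'(t*)² + (2/9)·D⁻h''(t*)/(-h'(t*))]·(t* - t)³`,
where `H_h(t) = t - (1/(1 - L_h(t)))·(h(t)/h'(t))`, `L_h(t) = h(t)h''(t)/(2h'(t)²)`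
and `D⁻h''(t*) = sup_{u < t*} (h''(t*) - h''(u))/(t* - u)` is the left directional
derivative of `h''` at `t*`. Here `h1` and `h2` denote the first and second
derivatives of `h` on `[0,R)`, and `tstar` is the smallest zero of `h` in `(0,R)`. -/
theorem halley_majorant_tstar_sub_Hh_le
    (R : ℝ) (hR : 0 < R) (h h1 h2 : ℝ → ℝ)
    (hd1 : ∀ t ∈ Set.Ico (0:ℝ) R, HasDerivWithinAt h (h1 t) (Set.Ico 0 R) t)
    (hd2 : ∀ t ∈ Set.Ico (0:ℝ) R, HasDerivWithinAt h1 (h2 t) (Set.Ico 0 R) t)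
    (hc2 : ContinuousOn h2 (Set.Ico 0 R))
    (hA1a : 0 < h 0) (hA1b : 0 < h2 0) (hA1c : h1 0 = -1)
    (hA2a : ConvexOn ℝ (Set.Ico 0 R) h2)
    (hA2b : StrictMonoOn h2 (Set.Ico 0 R))
    (tstar : ℝ) (htsmem : tstar ∈ Set.Ioo 0 R) (htszero : h tstar = 0)
    (htsmin : ∀ t ∈ Set.Ioo (0:ℝ) R, h t = 0 → tstar ≤ t)
    (htsder : h1 tstar < 0) :
    ∀ t ∈ Set.Ico (0:ℝ) tstar,
      tstar - (t - (1 / (1 - h t * h2 t / (2 * (h1 t) ^ 2))) * (h t / h1 t)) ≤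
        ((1 / 3) * ((h2 tstar) ^ 2 / (h1 tstar) ^ 2) +
          (2 / 9) * (sSup ((fun u => (h2 tstar - h2 u) / (tstar - u)) ''
            Set.Ico (0:ℝ) tstar) / (-(h1 tstar)))) * (tstar - t) ^ 3 := by
  intro t ht
  have htR : t ∈ Ico 0 R := ⟨ht.1, ht.2.trans htsmem.2⟩
  rw [sSup_div_sub_image_Ico_eq_leftDeriv hA2a htsmem]
  exact halley_majorant_tstar_sub_Hh_le_general hd1 hd2 hA2a hA2b.monotoneOn
    (by rwa [interior_Ico]) htszero htsder htR ht.2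
    (hA1b.le.trans (hA2b.monotoneOn ⟨le_rfl, hR⟩ htR ht.1))
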